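/- Let d ≥ 2 and 0 < s < d be integers, and let Γ = {a, h, t, x} be a four-element set. Let W₁ be the set of multisets of size d over Γ that contain at least one x, or at least s+1 copies of h, or at least d−s+1 copies of t. Call a d-tuple (S₁,…,S_d) of nonempty subsets of Γ closed if for every choice x₁ ∈ S₁, …, x_d ∈ S_d the multiset {x₁,…,x_d} belongs to W₁; order such tuples by (S₁,…,S_d) ≤ (S′₁,…,S′_d) iff there is a permutation π with S_i ⊆ S′_{π(i)} for all i. Then the maximal closed tuples are exactly, up to permutation of coordinates: ({x}, Γ, …, Γ) (one coordinate {x} and d−1 coordinates Γ); ({h,x} repeated s+1 times and Γ repeated d−s−1 times); and ({t,x} repeated d−s+1 times and Γ repeated s−1 times). -/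

import Mathlib

/-- The four-letter alphabet `Γ = {a, h, t, x}`. -/
inductive Gam : Type
  | a | h | t | x
deriving DecidableEq

instance : Fintype Gam :=
  ⟨{Gam.a, Gam.h, Gam.t, Gam.x}, by intro y; cases y <;> simp⟩

/-- The multiset of values of a tuple. -/
def tupleMultiset {n : ℕ} (f : Fin n → Gam) : Multiset Gam :=
  (Finset.univ : Finset (Fin n)).val.map f

/-- Membership in the white constraint `W₁`: the multiset contains at least one `x`, or at
least `s+1` copies of `h`, or at least `d-s+1` copies of `t`. -/
def InW1 (d s : ℕ) (m : Multiset Gam) : Prop :=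
  Gam.x ∈ m ∨ s + 1 ≤ m.count Gam.h ∨ d - s + 1 ≤ m.count Gam.t

/-- A tuple of subsets of `Γ` is closed if every choice from the sets gives a multiset
in `W₁`. -/
def ClosedW1 (d s : ℕ) {n : ℕ} (S : Fin n → Set Gam) : Prop :=
  ∀ f : Fin n → Gam, (∀ i, f i ∈ S i) → InW1 d s (tupleMultiset f)

/-- `S ≤ S'` iff there is a permutation `π` with `S i ⊆ S' (π i)` for all `i`. -/
def TupLE {n : ℕ} (S S' : Fin n → Set Gam) : Prop :=
  ∃ π : Equiv.Perm (Fin n), ∀ i, S i ⊆ S' (π i)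

/-- Two tuples are equal up to a permutation of coordinates. -/
def PermEq {n : ℕ} (S S' : Fin n → Set Gam) : Prop :=
  ∃ π : Equiv.Perm (Fin n), ∀ i, S i = S' (π i)

def Blk (d k : ℕ) (U : Set Gam) : Fin d → Set Gam :=
  fun i => if (i : ℕ) < k then U else Set.univ

lemma card_lt (d k : ℕ) (hk : k ≤ d) :
    (Finset.univ.filter (fun i : Fin d => (i : ℕ) < k)).card = k := by
  rw [Fin.card_filter_val_lt]; omega

lemma count_tm {n : ℕ} (f : Fin n → Gam) (c : Gam) :
    (tupleMultiset f).count c = (Finset.univ.filter (fun i => f i = c)).card := by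
  unfold tupleMultiset
  rw [Multiset.count_map]
  simp only [Finset.card, Finset.filter_val, eq_comm]

lemma x_mem_tm {n : ℕ} (f : Fin n → Gam) : Gam.x ∈ tupleMultiset f ↔ ∃ i, f i = Gam.x := by
  simp [tupleMultiset]

lemma TupLE.trans' {n : ℕ} {S T U : Fin n → Set Gam} (h1 : TupLE S T) (h2 : TupLE T U) :
    TupLE S U := by
  obtain ⟨p, hp⟩ := h1
  obtain ⟨q, hq⟩ := h2
  exact ⟨p.trans q, fun i => (hp i).trans (hq (p i))⟩

lemma PermEq.le {n : ℕ} {S T : Fin n → Set Gam} (h : PermEq S T) : TupLE S T := by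
  obtain ⟨p, hp⟩ := h
  exact ⟨p, fun i => (hp i).subset⟩

lemma PermEq.ge {n : ℕ} {S T : Fin n → Set Gam} (h : PermEq S T) : TupLE T S := by
  obtain ⟨p, hp⟩ := h
  exact ⟨p.symm, fun i => by rw [hp]; simp⟩

lemma TupLE.antisymm' {n : ℕ} {S T : Fin n → Set Gam} (h1 : TupLE S T) (h2 : TupLE T S) :
    PermEq S T := by
  obtain ⟨p, hp⟩ := h1
  obtain ⟨q, hq⟩ := h2
  have a1 : ∀ i ∈ Finset.univ, (S i).ncard ≤ (T (p i)).ncard :=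
    fun i _ => Set.ncard_le_ncard (hp i) (Set.toFinite _)
  have a2 : ∀ i ∈ Finset.univ, (T i).ncard ≤ (S (q i)).ncard :=
    fun i _ => Set.ncard_le_ncard (hq i) (Set.toFinite _)
  have e1 : ∑ i, (T (p i)).ncard = ∑ i, (T i).ncard := Equiv.sum_comp p (fun i => (T i).ncard)
  have e2 : ∑ i, (S (q i)).ncard = ∑ i, (S i).ncard := Equiv.sum_comp q (fun i => (S i).ncard)
  have l1 := Finset.sum_le_sum a1
  have l2 := Finset.sum_le_sum a2
  have e : ∑ i, (S i).ncard = ∑ i, (T (p i)).ncard := by omega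
  have := (Finset.sum_eq_sum_iff_of_le a1).1 e
  exact ⟨p, fun i => Set.eq_of_subset_of_ncard_le (hp i) (this i (Finset.mem_univ i)).ge
    (Set.toFinite _)⟩

open Classical in
lemma le_blk {d k : ℕ} (hk : k ≤ d) (S : Fin d → Set Gam) (U : Set Gam)
    (h : k ≤ (Finset.univ.filter (fun i => S i ⊆ U)).card) : TupLE S (Blk d k U) := by
  obtain ⟨T, hT, hTc⟩ := Finset.exists_subset_card_eq h
  have e : {j : Fin d // (j : ℕ) < k} ≃ {i : Fin d // i ∈ T} := by
    apply Fintype.equivOfCardEq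
    rw [Fintype.card_subtype, card_lt d k hk, Fintype.card_coe, hTc]
  refine ⟨e.extendSubtype.symm, fun i => ?_⟩
  unfold Blk
  split_ifs with hi
  · have := e.extendSubtype_mem _ hi
    rw [Equiv.apply_symm_apply] at this
    exact (Finset.mem_filter.1 (hT this)).2
  · exact Set.subset_univ _

lemma blk_count {d k : ℕ} (hk : k ≤ d) (c : Gam) (f : Fin d → Gam)
    (hf : ∀ i, f i ∈ Blk d k {c, Gam.x} i) (hx : ¬ Gam.x ∈ tupleMultiset f) :
    k ≤ (tupleMultiset f).count c := by
  rw [count_tm]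
  conv_lhs => rw [← card_lt d k hk]
  apply Finset.card_le_card
  intro i hi
  simp only [Finset.mem_filter, Finset.mem_univ, true_and] at hi ⊢
  have := hf i
  simp only [Blk, hi, if_true] at this
  rcases this with h | h
  · exact h
  · exact absurd ((x_mem_tm f).2 ⟨i, h⟩) hx

open Classical in
lemma closed_le (d s : ℕ) (hs0 : 0 < s) (hsd : s < d)
    (S : Fin d → Set Gam) (hc : ClosedW1 d s S) :
    TupLE S (Blk d 1 {Gam.x}) ∨ TupLE S (Blk d (s+1) {Gam.h, Gam.x}) ∨
      TupLE S (Blk d (d-s+1) {Gam.t, Gam.x}) := by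
  by_contra! hcon
  obtain ⟨n1, n2, n3⟩ := hcon
  have c1 := mt (le_blk (by omega) S {Gam.x}) n1
  have c2 := mt (le_blk (by omega) S {Gam.h, Gam.x}) n2
  have c3 := mt (le_blk (by omega) S {Gam.t, Gam.x}) n3
  have hx : ∀ i, ¬ S i ⊆ {Gam.x} := by
    intro i hi
    exact c1 (Finset.card_pos.2 ⟨i, by simpa using hi⟩)
  set H := Finset.univ.filter (fun i => S i ⊆ {Gam.h, Gam.x}) with hH
  set T := Finset.univ.filter (fun i => S i ⊆ {Gam.t, Gam.x}) with hT
  have hsub : H ⊆ Tᶜ := by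
    intro i hi
    simp only [hH, hT, Finset.mem_compl, Finset.mem_filter, Finset.mem_univ, true_and] at hi ⊢
    intro ht
    apply hx i
    intro y hy
    have h1 := hi hy
    have h2 := ht hy
    cases y <;> simp_all
  have hTc : Tᶜ.card = d - T.card := by simp [Finset.card_compl]
  obtain ⟨M, hM1, hM2, hMc⟩ := Finset.exists_subsuperset_card_eq hsub
    (n := s) (by omega) (by omega)
  let f : Fin d → Gam := fun i =>
    if Gam.a ∈ S i then Gam.a else if i ∈ M then Gam.h else Gam.t
  have hf : ∀ i, f i ∈ S i := by
    intro i
    simp only [f]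
    split_ifs with h1 h2
    · exact h1
    · have h3 := hM2 h2
      simp only [hT, Finset.mem_compl, Finset.mem_filter, Finset.mem_univ, true_and] at h3
      by_contra h4
      apply h3
      intro y hy
      cases y <;> simp_all
    · have h3 := mt (@hM1 i) h2
      simp only [hH, Finset.mem_filter, Finset.mem_univ, true_and] at h3
      by_contra h4
      apply h3
      intro y hy
      cases y <;> simp_all
  rcases hc f hf with h | h | h
  · obtain ⟨i, hi⟩ := (x_mem_tm f).1 h
    simp only [f] at hi
    split_ifs at hi
  · rw [count_tm] at h
    have : (Finset.univ.filter (fun i => f i = Gam.h)) ⊆ M := by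
      intro i hi
      have hi := (Finset.mem_filter.1 hi).2
      by_contra h2
      simp only [f, if_neg h2] at hi
      split_ifs at hi
    have := Finset.card_le_card this
    omega
  · rw [count_tm] at h
    have : (Finset.univ.filter (fun i => f i = Gam.t)) ⊆ Mᶜ := by
      intro i hi
      have hi := (Finset.mem_filter.1 hi).2
      rw [Finset.mem_compl]
      intro h2
      simp only [f, h2] at hi
      split_ifs at hi
    have := Finset.card_le_card this
    have hMc' : Mᶜ.card = d - M.card := by simp [Finset.card_compl]
    omega

lemma closed_of_le {d s : ℕ} {n : ℕ} {S T : Fin n → Set Gam} (h : TupLE S T)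
    (hT : ClosedW1 d s T) : ClosedW1 d s S := by
  obtain ⟨p, hp⟩ := h
  intro f hf
  have := hT (f ∘ p.symm) (fun i => by simpa using hp (p.symm i) (hf _))
  have e : tupleMultiset (f ∘ p.symm) = tupleMultiset f := by
    unfold tupleMultiset
    rw [← Multiset.map_map]
    congr 1
    have := congrArg Finset.val (Finset.map_univ_equiv p.symm)
    simpa using this
  rwa [e] at this

lemma not_blk_le {d k l : ℕ} (hk : 0 < k) (hd : 0 < d) {U V : Set Gam} (c : Gam) (hU : c ∈ U)
    (hV : c ∉ V) : ¬ TupLE (Blk d l U) (Blk d k V) := by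
  rintro ⟨p, hp⟩
  have := hp (p.symm ⟨0, hd⟩)
  rw [Equiv.apply_symm_apply] at this
  have h1 : c ∈ Blk d l U (p.symm ⟨0, hd⟩) := by
    unfold Blk; split_ifs <;> simp [hU]
  have h2 := this h1
  simp only [Blk, hk, if_true] at h2
  exact hV h2

lemma not_x_le {d k : ℕ} (hk : 2 ≤ k) (hd : 2 ≤ d) {V : Set Gam}
    (hV : Gam.a ∉ V) : ¬ TupLE (Blk d 1 {Gam.x}) (Blk d k V) := by
  rintro ⟨p, hp⟩
  have key : ∀ j : Fin d, (j : ℕ) < k → ((p.symm j : Fin d) : ℕ) = 0 := by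
    intro j hj
    by_contra hne
    have := hp (p.symm j)
    rw [Equiv.apply_symm_apply] at this
    have h2 := @this Gam.a (by
      unfold Blk; rw [if_neg (by omega)]; trivial)
    simp only [Blk, hj, if_true] at h2
    exact hV h2
  have h0 := key ⟨0, by omega⟩ (by simp; omega)
  have h1 := key ⟨1, by omega⟩ (by simp; omega)
  have := p.symm.injective (Fin.ext (h0.trans h1.symm))
  simp at this

theorem stmt_14 (d s : ℕ) (hd : 2 ≤ d) (hs0 : 0 < s) (hsd : s < d)
    (S : Fin d → Set Gam) (hS : ∀ i, (S i).Nonempty) :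
    (ClosedW1 d s S ∧ ∀ S' : Fin d → Set Gam, (∀ i, (S' i).Nonempty) → ClosedW1 d s S' →
        TupLE S S' → TupLE S' S) ↔
    (PermEq S (fun i => if i = (⟨0, by omega⟩ : Fin d) then ({Gam.x} : Set Gam)
                        else Set.univ) ∨
     PermEq S (fun i => if (i : ℕ) < s + 1 then ({Gam.h, Gam.x} : Set Gam) else Set.univ) ∨
     PermEq S (fun i => if (i : ℕ) < d - s + 1 then ({Gam.t, Gam.x} : Set Gam)
                        else Set.univ)) := by
  have eA : (fun i => if i = (⟨0, by omega⟩ : Fin d) then ({Gam.x} : Set Gam)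
      else Set.univ) = Blk d 1 {Gam.x} := by
    funext i
    simp [Blk, Fin.ext_iff]
  rw [eA]
  change _ ↔ (PermEq S (Blk d 1 {Gam.x}) ∨ PermEq S (Blk d (s+1) {Gam.h, Gam.x}) ∨
    PermEq S (Blk d (d-s+1) {Gam.t, Gam.x}))
  have cA : ClosedW1 d s (Blk d 1 {Gam.x}) := by
    intro f hf
    left
    rw [x_mem_tm]
    have := hf ⟨0, by omega⟩
    simp only [Blk, zero_lt_one, if_true] at this
    exact ⟨_, this⟩
  have cB : ClosedW1 d s (Blk d (s+1) {Gam.h, Gam.x}) := by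
    intro f hf
    by_cases hx : Gam.x ∈ tupleMultiset f
    · exact Or.inl hx
    · exact Or.inr (Or.inl (blk_count (by omega) _ f hf hx))
  have cC : ClosedW1 d s (Blk d (d-s+1) {Gam.t, Gam.x}) := by
    intro f hf
    by_cases hx : Gam.x ∈ tupleMultiset f
    · exact Or.inl hx
    · exact Or.inr (Or.inr (blk_count (by omega) _ f hf hx))
  have ne : ∀ (k : ℕ) (U : Set Gam), Gam.x ∈ U → ∀ i, (Blk d k U i).Nonempty := by
    intro k U hU i
    refine ⟨Gam.x, ?_⟩
    unfold Blk; split_ifs <;> simp [hU]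
  constructor
  · rintro ⟨hc, hmax⟩
    rcases closed_le d s hs0 hsd S hc with h | h | h
    · exact Or.inl (h.antisymm' (hmax _ (ne _ _ (by simp)) cA h))
    · exact Or.inr (Or.inl (h.antisymm' (hmax _ (ne _ _ (by simp)) cB h)))
    · exact Or.inr (Or.inr (h.antisymm' (hmax _ (ne _ _ (by simp)) cC h)))
  · rintro (h | h | h)
    · refine ⟨closed_of_le h.le cA, fun S' _ hc hle => ?_⟩
      rcases closed_le d s hs0 hsd S' hc with h' | h' | h'
      · exact h'.trans' h.ge
      · exact absurd (h.ge.trans' (hle.trans' h')) (not_x_le (by omega) hd (by simp))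
      · exact absurd (h.ge.trans' (hle.trans' h')) (not_x_le (by omega) hd (by simp))
    · refine ⟨closed_of_le h.le cB, fun S' _ hc hle => ?_⟩
      rcases closed_le d s hs0 hsd S' hc with h' | h' | h'
      · exact absurd (h.ge.trans' (hle.trans' h'))
          (not_blk_le (by omega) (by omega) Gam.h (by simp) (by simp))
      · exact h'.trans' h.ge
      · exact absurd (h.ge.trans' (hle.trans' h'))
          (not_blk_le (by omega) (by omega) Gam.h (by simp) (by simp))
    · refine ⟨closed_of_le h.le cC, fun S' _ hc hle => ?_⟩
      rcases closed_le d s hs0 hsd S' hc with h' | h' | h'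
      · exact absurd (h.ge.trans' (hle.trans' h'))
          (not_blk_le (by omega) (by omega) Gam.t (by simp) (by simp))
      · exact absurd (h.ge.trans' (hle.trans' h'))
          (not_blk_le (by omega) (by omega) Gam.t (by simp) (by simp))
      · exact h'.trans' h.ge
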